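/- For all integers n ≥ 1 and m ≥ 1, both A_{n,m} and A_{n,m+1} are degree-n polynomials having only real, negative, simple roots, and A_{n,m+1} strictly alternates A_{n,m}: if a_1 < ⋯ < a_n are the roots of A_{n,m} and b_1 < ⋯ < b_n are the roots of A_{n,m+1}, then b_1 < a_1 < b_2 < a_2 < ⋯ < b_n < a_n. -/

import Mathlib

open Polynomial

noncomputable section

/-- The polylogarithm of negative integer order: `Li_{−n}(t) = ∑_{k=1}^∞ k^n t^k`
(the `k = 0` term vanishes for `n ≥ 1`). -/
def fbhLi (n : ℕ) (t : ℂ) : ℂ := ∑' k : ℕ, (k : ℂ) ^ n * t ^ k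

/-!
The rational function `F = A_{n,m} / (1 - t) ^ (n + m + 1)` has derivative
`A_{n,m+1} / (1 - t) ^ (n + m + 2)` and tends to `0` at `-∞`. If `A_{n,m}` has `n` distinct roots
below `1`, Rolle's theorem therefore yields a root of `A_{n,m+1}` in each of the `n - 1` gaps
between them and one more to the left of the smallest, so all `n` roots are accounted for. Since
`Li_{-(n+1)} = t (d/dt) Li_{-n}`, we have `A_{n+1,0} = t A_{n,1}`, whose roots are those of
`A_{n,1}` together with `0`; this carries the induction from one `n` to the next.
-/

section PoleDerivative

variable {R : Type*} [CommRing R]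

/-- The numerator of the derivative of `P / (1 - X) ^ N`, written over the denominator
`(1 - X) ^ (N + 1)`. -/
def poleDeriv (N : ℕ) (P : R[X]) : R[X] := (1 - X) * derivative P + (N : R[X]) * P

lemma coeff_poleDeriv (N : ℕ) (P : R[X]) (k : ℕ) :
    (poleDeriv N P).coeff k = (k + 1) * P.coeff (k + 1) + (N - k) * P.coeff k := by
  rw [poleDeriv, sub_mul, one_mul, coeff_add, coeff_sub, coeff_natCast_mul]
  cases k with
  | zero => simp [coeff_derivative]
  | succ k =>
    rw [coeff_X_mul, coeff_derivative, coeff_derivative]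
    push_cast
    ring

lemma degree_poleDeriv [NoZeroDivisors R] [CharZero R] {N : ℕ} {P : R[X]}
    (hN : P.natDegree ≠ N) : (poleDeriv N P).degree = P.degree := by
  rcases eq_or_ne P 0 with rfl | hP
  · simp [poleDeriv]
  rw [degree_eq_natDegree hP]
  apply degree_eq_of_le_of_coeff_ne_zero
  · rw [degree_le_iff_coeff_zero]
    intro k hk
    have hk : P.natDegree < k := by exact_mod_cast hk
    simp [coeff_poleDeriv, coeff_eq_zero_of_natDegree_lt, hk, hk.trans k.lt_succ_self]
  · have hcast : (N : R) - P.natDegree ≠ 0 := sub_ne_zero.2 (by exact_mod_cast hN.symm)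
    simpa [coeff_poleDeriv, coeff_eq_zero_of_natDegree_lt, hP] using hcast

lemma hasDerivAt_aeval_div_one_sub_pow {𝕜 : Type*} [NontriviallyNormedField 𝕜] [Algebra R 𝕜]
    (N : ℕ) (P : R[X]) {t : 𝕜} (ht : 1 - t ≠ 0) :
    HasDerivAt (fun u ↦ aeval u P / (1 - u) ^ N)
      (aeval t (poleDeriv N P) / (1 - t) ^ (N + 1)) t := by
  have hpow : HasDerivAt (fun u : 𝕜 ↦ (1 - u) ^ N) (N * (1 - t) ^ (N - 1) * -1) t :=
    ((hasDerivAt_id t).const_sub 1).pow N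
  refine ((P.hasDerivAt_aeval t).div hpow (pow_ne_zero N ht)).congr_deriv ?_
  simp only [poleDeriv, map_add, map_mul, map_sub, map_one, aeval_X, map_natCast]
  cases N with
  | zero => field_simp; simp
  | succ N => rw [Nat.add_sub_cancel]; field_simp; ring

end PoleDerivative

section Rolle

open Filter Topology Set

theorem exists_hasDerivAt_eq_zero_of_tendsto_atBot {f f' : ℝ → ℝ} {a l : ℝ}
    (hbot : Tendsto f atBot (𝓝 l)) (ha : Tendsto f (𝓝[<] a) (𝓝 l))
    (hff' : ∀ x < a, HasDerivAt f (f' x) x) : ∃ x < a, f' x = 0 := by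
  have hlt {u : ℝ} (hu : u ∈ Ioo 0 1) : a + 1 - u⁻¹ < a := by
    linarith [(one_lt_inv₀ hu.1).2 hu.2]
  -- Reduce to a bounded interval: `u ↦ a + 1 - u⁻¹` maps `(0, 1)` increasingly onto `(-∞, a)`.
  have hzero : Tendsto (fun u : ℝ ↦ a + 1 - u⁻¹) (𝓝[>] 0) atBot :=
    tendsto_atBot_add_const_left _ (a + 1) (tendsto_neg_atTop_atBot.comp tendsto_inv_nhdsGT_zero)
  have hone : Tendsto (fun u : ℝ ↦ a + 1 - u⁻¹) (𝓝[<] 1) (𝓝[<] a) := by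
    refine tendsto_nhdsWithin_iff.2 ⟨tendsto_nhdsWithin_of_tendsto_nhds ?_, ?_⟩
    · have : ContinuousAt (fun u : ℝ ↦ a + 1 - u⁻¹) 1 := by fun_prop (disch := norm_num)
      simpa [ContinuousAt] using this
    · filter_upwards [Ioo_mem_nhdsLT (zero_lt_one (α := ℝ))] with u hu using hlt hu
  obtain ⟨u, hu, hfu⟩ := exists_hasDerivAt_eq_zero' one_pos (hbot.comp hzero) (ha.comp hone)
    fun u hu ↦ (hff' _ (hlt hu)).comp u ((hasDerivAt_inv hu.1.ne').const_sub (a + 1))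
  exact ⟨_, hlt hu, by simpa [hu.1.ne'] using hfu⟩

variable {N : ℕ} {P : ℝ[X]} {x y : ℝ}

lemma isRoot_poleDeriv_of_aeval_div_eq_zero (hx : x < 1)
    (h : aeval x (poleDeriv N P) / (1 - x) ^ (N + 1) = 0) : (poleDeriv N P).IsRoot x := by
  simpa [sub_ne_zero.2 hx.ne'] using h

lemma exists_isRoot_poleDeriv_mem_Ioo (hxy : x < y) (hy1 : y < 1) (hx : P.IsRoot x)
    (hy : P.IsRoot y) : ∃ z ∈ Ioo x y, (poleDeriv N P).IsRoot z := by
  have hderiv (z : ℝ) (hz : z ≤ y) : HasDerivAt (fun u : ℝ ↦ aeval u P / (1 - u) ^ N)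
      (aeval z (poleDeriv N P) / (1 - z) ^ (N + 1)) z :=
    hasDerivAt_aeval_div_one_sub_pow N P (sub_pos.2 (hz.trans_lt hy1)).ne'
  obtain ⟨z, hz, hz0⟩ := exists_hasDerivAt_eq_zero hxy
    (fun z hz ↦ (hderiv z hz.2).continuousAt.continuousWithinAt)
    (by simp [hx.eq_zero, hy.eq_zero]) fun z hz ↦ hderiv z hz.2.le
  exact ⟨z, hz, isRoot_poleDeriv_of_aeval_div_eq_zero (hz.2.trans hy1) hz0⟩

lemma exists_isRoot_poleDeriv_lt (hN : P.degree < N) (hy1 : y < 1) (hy : P.IsRoot y) :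
    ∃ z < y, (poleDeriv N P).IsRoot z := by
  have hderiv (z : ℝ) (hz : z ≤ y) : HasDerivAt (fun u : ℝ ↦ aeval u P / (1 - u) ^ N)
      (aeval z (poleDeriv N P) / (1 - z) ^ (N + 1)) z :=
    hasDerivAt_aeval_div_one_sub_pow N P (sub_pos.2 (hz.trans_lt hy1)).ne'
  have hdegree : ((1 - X : ℝ[X]) ^ N).degree = N := by
    rw [degree_pow, ← neg_sub, degree_neg, ← C_1, degree_X_sub_C, nsmul_one]
  have hbot : Tendsto (fun z : ℝ ↦ aeval z P / (1 - z) ^ N) atBot (𝓝 0) := by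
    simpa using
      P.div_tendsto_atBot_zero_of_degree_lt ((1 - X : ℝ[X]) ^ N) (hN.trans_eq hdegree.symm)
  have hleft : Tendsto (fun z : ℝ ↦ aeval z P / (1 - z) ^ N) (𝓝[<] y) (𝓝 0) := by
    simpa [hy.eq_zero] using (hderiv y le_rfl).continuousAt.tendsto.mono_left nhdsWithin_le_nhds
  obtain ⟨z, hz, hz0⟩ :=
    exists_hasDerivAt_eq_zero_of_tendsto_atBot hbot hleft fun z hz ↦ hderiv z hz.le
  exact ⟨z, hz, isRoot_poleDeriv_of_aeval_div_eq_zero (hz.trans hy1) hz0⟩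

end Rolle

section RootLists

variable {R : Type*} [CommRing R] [LinearOrder R]

/-- The polynomial `P` of degree `n` has `n` distinct roots in `R`, listed in increasing order by
`a`; in particular all its roots are simple and lie in `R`. -/
structure HasSimpleRoots {n : ℕ} (P : R[X]) (a : Fin n → R) : Prop where
  degree_eq : P.degree = n
  strictMono : StrictMono a
  isRoot : ∀ i, P.IsRoot (a i)

/-- The relation `b₁ < a₁ < b₂ < a₂ < ⋯` between two lists of equal length, in a form that does
not presuppose that either list is increasing. -/
def StrictlyAlternates {ι α : Type*} [LT ι] [LT α] (b a : ι → α) : Prop :=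
  (∀ i, b i < a i) ∧ ∀ i j, i < j → a i < b j

lemma StrictlyAlternates.strictMono_left {ι α : Type*} [Preorder ι] [Preorder α] {b a : ι → α}
    (h : StrictlyAlternates b a) : StrictMono b :=
  fun i j hij ↦ (h.1 i).trans (h.2 i j hij)

namespace HasSimpleRoots

variable {n : ℕ}

theorem eq_C_mul_prod [IsDomain R] {P : R[X]} {a : Fin n → R} (h : HasSimpleRoots P a) :
    P = C P.leadingCoeff * ∏ i, (X - C (a i)) := by
  have hP : P ≠ 0 := by
    rintro rfl
    simpa using h.degree_eq
  have hdeg : P.natDegree = n := natDegree_eq_of_degree_eq_some h.degree_eq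
  have hle : Finset.univ.val.map a ≤ P.roots := by
    rw [Multiset.le_iff_subset (Finset.univ.nodup.map h.strictMono.injective)]
    intro x hx
    obtain ⟨i, -, rfl⟩ := Multiset.mem_map.1 hx
    exact (mem_roots hP).2 (h.isRoot i)
  have hroots : Finset.univ.val.map a = P.roots :=
    Multiset.eq_of_le_of_card_le hle (by simpa [hdeg] using P.card_roots')
  have hprod := C_leadingCoeff_mul_prod_multiset_X_sub_C (p := P) (by simp [← hroots, hdeg])
  rw [← hroots, Multiset.map_map] at hprod
  exact hprod.symm

lemma snoc [IsDomain R] {P : R[X]} {a : Fin n → R} (h : HasSimpleRoots P a) {x : R}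
    (hx : ∀ i, a i < x) : HasSimpleRoots ((X - C x) * P) (Fin.snoc a x : Fin (n + 1) → R) where
  degree_eq := by
    rw [degree_mul, degree_X_sub_C, h.degree_eq, add_comm]
    norm_cast
  strictMono i j hij := by
    cases i using Fin.lastCases with
    | last => exact absurd hij j.le_last.not_gt
    | cast i =>
      cases j using Fin.lastCases with
      | last => simpa using hx i
      | cast j => simpa using h.strictMono (by simpa using hij)
  isRoot i := by
    cases i using Fin.lastCases with
    | last => simp
    | cast i => simp [(h.isRoot i).eq_zero]

theorem exists_poleDeriv {N : ℕ} {P : ℝ[X]} {a : Fin n → ℝ} (h : HasSimpleRoots P a)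
    (ha1 : ∀ i, a i < 1) (hN : n < N) :
    ∃ b : Fin n → ℝ, HasSimpleRoots (poleDeriv N P) b ∧ StrictlyAlternates b a := by
  have hroot (j : Fin n) : ∃ z < a j, (∀ i < j, a i < z) ∧ (poleDeriv N P).IsRoot z := by
    cases n with
    | zero => exact j.elim0
    | succ n =>
      cases j using Fin.cases with
      | zero =>
        have hdeg : P.degree < N := by rw [h.degree_eq]; exact_mod_cast hN
        obtain ⟨z, hz, hz0⟩ := exists_isRoot_poleDeriv_lt hdeg (ha1 0) (h.isRoot 0)
        exact ⟨z, hz, fun i hi ↦ absurd hi i.not_lt_zero, hz0⟩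
      | succ k =>
        obtain ⟨z, ⟨hkz, hz⟩, hz0⟩ := exists_isRoot_poleDeriv_mem_Ioo (N := N)
          (h.strictMono k.castSucc_lt_succ) (ha1 _) (h.isRoot _) (h.isRoot _)
        exact ⟨z, hz, fun i hi ↦
          (h.strictMono.monotone (Fin.le_castSucc_iff.2 hi)).trans_lt hkz, hz0⟩
  choose b hba hab hb using hroot
  have halt : StrictlyAlternates b a := ⟨hba, fun i j ↦ hab j i⟩
  refine ⟨b, ⟨?_, halt.strictMono_left, hb⟩, halt⟩
  rw [degree_poleDeriv (by rw [natDegree_eq_of_degree_eq_some h.degree_eq]; exact hN.ne),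
    h.degree_eq]

end HasSimpleRoots

end RootLists

section Polylogarithm

/-- The polynomial `A_{n,m}`, defined recursively: `t d/dt` maps `Li_{-n}` to `Li_{-(n+1)}`, which
gives the second clause. The value `A_{0,0} = 1` comes from including `k = 0` in the series of
`fbhLi 0`. -/
def polylogNumerator : ℕ → ℕ → ℝ[X]
  | 0, 0 => 1
  | n + 1, 0 => X * polylogNumerator n 1
  | n, m + 1 => poleDeriv (n + m + 1) (polylogNumerator n m)

theorem exists_hasSimpleRoots_polylogNumerator (n m : ℕ) :
    ∃ a : Fin n → ℝ, HasSimpleRoots (polylogNumerator n m) a ∧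
      (∀ i, a i ≤ 0) ∧ (1 ≤ m → ∀ i, a i < 0) := by
  fun_induction polylogNumerator n m with
  | case1 => exact ⟨Fin.elim0, ⟨by simp, fun i ↦ i.elim0, fun i ↦ i.elim0⟩, by simp, by simp⟩
  | case2 n ih =>
    obtain ⟨a, ha, -, ha0⟩ := ih
    refine ⟨Fin.snoc a 0, by simpa using ha.snoc (ha0 le_rfl), fun i ↦ ?_, by simp⟩
    cases i using Fin.lastCases with
    | last => simp
    | cast i => simpa using (ha0 le_rfl i).le
  | case3 n m ih =>
    obtain ⟨a, ha, ha0, -⟩ := ih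
    obtain ⟨b, hb, hba⟩ :=
      ha.exists_poleDeriv (fun i ↦ (ha0 i).trans_lt one_pos) (N := n + m + 1) (by lia)
    have hb0 (i) : b i < 0 := (hba.1 i).trans_le (ha0 i)
    exact ⟨b, hb, fun i ↦ (hb0 i).le, fun _ ↦ hb0⟩

lemma fbhLi_succ (n : ℕ) {t : ℂ} (ht : ‖t‖ < 1) : fbhLi (n + 1) t = t * deriv (fbhLi n) t := by
  obtain ⟨r, htr, hr1⟩ := exists_between ht
  have hr0 : 0 ≤ r := (norm_nonneg t).trans htr.le
  have hsummable : Summable fun k : ℕ ↦ (k : ℝ) ^ n * r ^ k :=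
    summable_pow_mul_geometric_of_norm_lt_one n (by rwa [Real.norm_of_nonneg hr0])
  have hbound (k : ℕ) (w : ℂ) (hw : w ∈ Metric.ball 0 r) :
      ‖(k : ℂ) ^ n * w ^ k‖ ≤ (k : ℝ) ^ n * r ^ k := by
    have hwr : ‖w‖ ≤ r := (mem_ball_zero_iff.1 hw).le
    rw [norm_mul, norm_pow, norm_pow, Complex.norm_natCast]
    gcongr
  have hderiv : HasSum (fun k : ℕ ↦ deriv (fun w : ℂ ↦ (k : ℂ) ^ n * w ^ k) t)
      (deriv (fbhLi n) t) :=
    Complex.hasSum_deriv_of_summable_norm hsummable (fun k ↦ by fun_prop) Metric.isOpen_ball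
      hbound (mem_ball_zero_iff.2 htr)
  rw [← (hderiv.mul_left t).tsum_eq, fbhLi]
  refine tsum_congr fun k ↦ ?_
  cases k with
  | zero => simp
  | succ k =>
    simp only [deriv_const_mul_field', deriv_pow_field, Nat.add_sub_cancel]
    ring

theorem iteratedDeriv_fbhLi (n m : ℕ) {t : ℂ} (ht : ‖t‖ < 1) :
    iteratedDeriv m (fbhLi n) t = aeval t (polylogNumerator n m) / (1 - t) ^ (n + m + 1) := by
  fun_induction polylogNumerator n m generalizing t with
  | case1 => simp [fbhLi, tsum_geometric_of_norm_lt_one ht]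
  | case2 n ih =>
    rw [iteratedDeriv_zero, fbhLi_succ n ht, ← iteratedDeriv_one, ih ht, map_mul, aeval_X,
      mul_div_assoc, add_zero]
  | case3 n m ih =>
    have hball : ∀ᶠ u in nhds t, ‖u‖ < 1 := continuous_norm.continuousAt.eventually_lt_const ht
    rw [iteratedDeriv_succ, Filter.EventuallyEq.deriv_eq (hball.mono fun u hu ↦ ih hu)]
    exact (hasDerivAt_aeval_div_one_sub_pow _ _ (isUnit_one_sub_of_norm_lt_one ht).ne_zero).deriv

theorem eq_polylogNumerator {n m : ℕ} {P : ℝ[X]} (hP : ∀ t : ℂ, ‖t‖ < 1 →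
      iteratedDeriv m (fbhLi n) t = aeval t P / (1 - t) ^ (n + m + 1)) :
    P = polylogNumerator n m := by
  refine map_injective (algebraMap ℝ ℂ) (algebraMap ℝ ℂ).injective <|
    eq_of_infinite_eval_eq _ _ <|
      (infinite_of_mem_nhds 0 (Metric.ball_mem_nhds (0 : ℂ) one_pos)).mono fun t ht ↦ ?_
  have ht : ‖t‖ < 1 := mem_ball_zero_iff.1 ht
  have hdiv := (hP t ht).symm.trans (iteratedDeriv_fbhLi n m ht)
  rw [div_left_inj' (pow_ne_zero _ (isUnit_one_sub_of_norm_lt_one ht).ne_zero)] at hdiv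
  simpa [eval_map_algebraMap] using hdiv

end Polylogarithm

/-- For `n, m ≥ 1`, both `A_{n,m}` (here `P`) and `A_{n,m+1}` (here `Q`) — the degree-`n`
real polynomials with `(d^m/dt^m) Li_{−n}(t) = A_{n,m}(t)/(1−t)^{n+m+1}` on the unit
disk — have only real, negative, simple roots, and `A_{n,m+1}` strictly alternates
`A_{n,m}`: their roots `a 0 < ⋯ < a (n-1)` and `b 0 < ⋯ < b (n-1)` satisfy
`b 0 < a 0 < b 1 < a 1 < ⋯ < b (n-1) < a (n-1)`. -/
theorem statement15 (n m : ℕ) (hn : 1 ≤ n) (hm : 1 ≤ m) (P Q : Polynomial ℝ)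
    (hPdeg : P.natDegree = n) (hQdeg : Q.natDegree = n)
    (hP : ∀ t : ℂ, ‖t‖ < 1 →
      iteratedDeriv m (fbhLi n) t = Polynomial.aeval t P / (1 - t) ^ (n + m + 1))
    (hQ : ∀ t : ℂ, ‖t‖ < 1 →
      iteratedDeriv (m + 1) (fbhLi n) t = Polynomial.aeval t Q / (1 - t) ^ (n + (m + 1) + 1)) :
    ∃ a b : Fin n → ℝ, StrictMono a ∧ StrictMono b ∧
      (∀ i, a i < 0) ∧ (∀ i, b i < 0) ∧
      P = C P.leadingCoeff * ∏ i, (X - C (a i)) ∧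
      Q = C Q.leadingCoeff * ∏ i, (X - C (b i)) ∧
      (∀ i, b i < a i) ∧
      (∀ (i : Fin n) (h : (i : ℕ) + 1 < n), a i < b ⟨(i : ℕ) + 1, h⟩) := by
  obtain rfl := eq_polylogNumerator hP
  obtain rfl := eq_polylogNumerator hQ
  obtain ⟨a, ha, -, hneg⟩ := exists_hasSimpleRoots_polylogNumerator n m
  have ha0 := hneg hm
  obtain ⟨b, hb, hba⟩ :=
    ha.exists_poleDeriv (fun i ↦ (ha0 i).trans one_pos) (N := n + m + 1) (by lia)
  rw [← polylogNumerator] at hb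
  exact ⟨a, b, ha.strictMono, hb.strictMono, ha0, fun i ↦ (hba.1 i).trans (ha0 i),
    ha.eq_C_mul_prod, hb.eq_C_mul_prod, hba.1, fun i h ↦ hba.2 i _ (Nat.lt_succ_self i)⟩
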